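/- For every γ > 0 there exists μ > 0 such that for every Δ ∈ ℕ there exists n₀ ∈ ℕ such that for every even n ≥ n₀ the following holds: let G be a graph on n vertices with minimum degree δ(G) ≥ (1 − 1/(2Δ) + γ)n, and let H be a balanced bipartite graph on n vertices with maximum degree Δ(H) ≤ Δ. Then for every proper (μn/Δ²)-bounded edge colouring χ of G there exists a subgraph of G isomorphic to H that is rainbow with respect to χ. -/

import Mathlib

open Classical in
/-- Lopsided Lovász local lemma, counting form. -/
theorem rb_lll {α ι : Type} [Fintype ι] (Om : Finset α) (hOm : Om.Nonempty)
    (A : ι → α → Prop) (N : ι → Finset ι) (p d : ℝ) (hp : 0 ≤ p)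
    (h1 : ∀ (i : ι) (S : Finset ι), (∀ j ∈ S, j ∉ N i) →
      ((Om.filter (fun x => A i x ∧ ∀ j ∈ S, ¬ A j x)).card : ℝ) ≤
        p * (Om.filter (fun x => ∀ j ∈ S, ¬ A j x)).card)
    (h2 : ∀ i, ((N i).card : ℝ) ≤ d) (h3 : 4 * p * d ≤ 1) (h4 : 4 * p ≤ 1) :
    ∃ x ∈ Om, ∀ i, ¬ A i x := by
  have key : ∀ (m : ℕ) (S : Finset ι), S.card = m → ∀ i,
      ((Om.filter (fun x => A i x ∧ ∀ j ∈ S, ¬ A j x)).card : ℝ) ≤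
        2 * p * (Om.filter (fun x => ∀ j ∈ S, ¬ A j x)).card := by
    intro m
    induction m using Nat.strong_induction_on with
    | _ m ih =>
      intro S hS i
      set S1 := S.filter (fun j => j ∈ N i) with hS1
      set S2 := S.filter (fun j => j ∉ N i) with hS2
      have hb := h1 i S2 (by intro j hj; exact (Finset.mem_filter.1 hj).2)
      have hmono : ((Om.filter (fun x => A i x ∧ ∀ j ∈ S, ¬ A j x)).card : ℝ) ≤
          (Om.filter (fun x => A i x ∧ ∀ j ∈ S2, ¬ A j x)).card := by
        norm_cast
        apply Finset.card_le_card
        intro x hx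
        simp only [Finset.mem_filter] at hx ⊢
        exact ⟨hx.1, hx.2.1, fun j hj => hx.2.2 j (Finset.mem_filter.1 hj).1⟩
      set X : ℝ := ((Om.filter (fun x => ∀ j ∈ S2, ¬ A j x)).card : ℝ) with hX
      have hX0 : 0 ≤ X := by positivity
      suffices hh : X ≤ 2 * ((Om.filter (fun x => ∀ j ∈ S, ¬ A j x)).card : ℝ) by
        calc _ ≤ _ := hmono
          _ ≤ p * X := hb
          _ ≤ p * (2 * ((Om.filter (fun x => ∀ j ∈ S, ¬ A j x)).card : ℝ)) := by gcongr
          _ = _ := by ring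
      have hcov : (Om.filter (fun x => ∀ j ∈ S2, ¬ A j x)) ⊆
          (Om.filter (fun x => ∀ j ∈ S, ¬ A j x)) ∪
          S1.biUnion (fun k => Om.filter (fun x => A k x ∧ ∀ j ∈ S2, ¬ A j x)) := by
        intro x hx
        simp only [Finset.mem_filter, Finset.mem_union, Finset.mem_biUnion] at hx ⊢
        by_cases hc : ∀ j ∈ S, ¬ A j x
        · exact Or.inl ⟨hx.1, hc⟩
        · push Not at hc
          obtain ⟨j, hj, hjx⟩ := hc
          right
          refine ⟨j, ?_, hx.1, hjx, hx.2⟩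
          by_contra hn
          have : j ∈ S2 := by
            rw [hS2, Finset.mem_filter]
            refine ⟨hj, fun hN => hn ?_⟩
            rw [hS1, Finset.mem_filter]
            exact ⟨hj, hN⟩
          exact hx.2 j this hjx
      have hcard : X ≤ ((Om.filter (fun x => ∀ j ∈ S, ¬ A j x)).card : ℝ) +
          ∑ k ∈ S1, ((Om.filter (fun x => A k x ∧ ∀ j ∈ S2, ¬ A j x)).card : ℝ) := by
        have := (Finset.card_le_card hcov).trans (Finset.card_union_le _ _)
        have h5 := Finset.card_biUnion_le (s := S1)
          (t := fun k => Om.filter (fun x => A k x ∧ ∀ j ∈ S2, ¬ A j x))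
        rw [hX]
        exact_mod_cast this.trans (Nat.add_le_add_left h5 _)
      have hsum : ∑ k ∈ S1, ((Om.filter (fun x => A k x ∧ ∀ j ∈ S2, ¬ A j x)).card : ℝ)
          ≤ ∑ k ∈ S1, 2 * p * X := by
        apply Finset.sum_le_sum
        intro k hk
        have hlt : S2.card < m := by
          rw [← hS]
          apply Finset.card_lt_card
          refine ⟨Finset.filter_subset _ _, fun hsub => ?_⟩
          have hk' := Finset.mem_filter.1 hk
          exact (Finset.mem_filter.1 (hsub hk'.1)).2 hk'.2
        exact ih _ hlt S2 rfl k
      rw [Finset.sum_const, nsmul_eq_mul] at hsum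
      have hS1c : (S1.card : ℝ) ≤ d := by
        refine le_trans ?_ (h2 i)
        norm_cast
        apply Finset.card_le_card
        intro j hj
        exact (Finset.mem_filter.1 hj).2
      have h6 : (S1.card : ℝ) * (2 * p * X) ≤ d * (2 * p * X) := by gcongr
      have h7 : d * (2 * p * X) ≤ X / 2 := by nlinarith
      linarith
  have pos : ∀ S : Finset ι, (0 : ℝ) < (Om.filter (fun x => ∀ j ∈ S, ¬ A j x)).card := by
    intro S
    induction S using Finset.induction_on with
    | empty => simpa using hOm
    | insert i S hi ih =>
      have hk := key _ S rfl i
      have hle : ((Om.filter (fun x => ∀ j ∈ S, ¬ A j x)).card : ℝ) ≤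
          ((Om.filter (fun x => ∀ j ∈ insert i S, ¬ A j x)).card : ℝ) +
          ((Om.filter (fun x => A i x ∧ ∀ j ∈ S, ¬ A j x)).card : ℝ) := by
        norm_cast
        refine le_trans (Finset.card_le_card ?_) (Finset.card_union_le _ _)
        intro x hx
        simp only [Finset.mem_filter, Finset.mem_union, Finset.forall_mem_insert] at hx ⊢
        tauto
      nlinarith
  have := pos Finset.univ
  norm_cast at this
  obtain ⟨x, hx⟩ := Finset.card_pos.1 this
  simp only [Finset.mem_filter] at hx
  exact ⟨x, hx.1, fun i => hx.2 i (Finset.mem_univ i)⟩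

/-- The key swapping lemma: many vertices `u` can be swapped with `w`. -/
theorem rb_swap {V W : Type} [Fintype V] [Fintype W] [DecidableEq W] (G : SimpleGraph V)
    (H : SimpleGraph W) (Δ m : ℕ)
    (hG : ∀ v, ({x | ¬ G.Adj v x} : Set V).ncard ≤ m)
    (hH : ∀ w, (H.neighborSet w).ncard ≤ Δ) (φ : W ≃ V) (w : W) :
    Fintype.card W ≤ 2 * Δ * m + ({u : W | ∀ x y, H.Adj x y → (x = w ∨ x = u) →
      G.Adj (φ (Equiv.swap w u x)) (φ (Equiv.swap w u y))} : Set W).ncard := by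
  classical
  set Good := ({u : W | ∀ x y, H.Adj x y → (x = w ∨ x = u) →
      G.Adj (φ (Equiv.swap w u x)) (φ (Equiv.swap w u y))} : Set W) with hGood
  let NH : W → Finset W := fun x => Finset.univ.filter (fun y => H.Adj x y)
  let NG : V → Finset W := fun v => Finset.univ.filter (fun y => ¬ G.Adj v (φ y))
  have hNH : ∀ x, (NH x).card ≤ Δ := by
    intro x
    refine le_trans (le_of_eq ?_) (hH x)
    rw [← Set.ncard_coe_finset]
    congr 1
    ext y; simp [NH]
  have hNG : ∀ v, (NG v).card ≤ m := by
    intro v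
    refine le_trans ?_ (hG v)
    rw [← Set.ncard_coe_finset]
    refine Set.ncard_le_ncard_of_injOn φ ?_ φ.injective.injOn (Set.toFinite _)
    intro y hy
    simpa [NG] using hy
  have hcov : (Finset.univ : Finset W) ⊆
      (((NH w).biUnion fun x => NG (φ x)) ∪ ((NG (φ w)).biUnion fun y => NH y)) ∪
        Good.toFinset := by
    intro u _
    by_contra hu
    simp only [Finset.mem_union, Finset.mem_biUnion, NH, NG, Finset.mem_filter,
      Finset.mem_univ, true_and, Set.mem_toFinset, not_or, not_exists, not_and, not_not] at hu
    obtain ⟨⟨h1, h2⟩, h3⟩ := hu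
    apply h3
    have hwu : ¬ H.Adj w u := fun h => G.loopless.irrefl _ (h1 u h)
    have h2' : ∀ y, H.Adj u y → G.Adj (φ w) (φ y) := by
      intro y hy
      by_contra hn
      exact h2 y hn hy.symm
    intro x y hxy hx
    rcases hx with rfl | rfl
    · have hyx : y ≠ x := hxy.ne'
      have hyu : y ≠ u := by rintro rfl; exact hwu hxy
      rw [Equiv.swap_apply_left, Equiv.swap_apply_of_ne_of_ne hyx hyu]
      exact (h1 y hxy).symm
    · have hyx : y ≠ x := hxy.ne'
      have hyw : y ≠ w := by rintro rfl; exact hwu hxy.symm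
      rw [Equiv.swap_apply_right, Equiv.swap_apply_of_ne_of_ne hyw hyx]
      exact h2' y hxy
  have hc := (Finset.card_le_card hcov).trans ((Finset.card_union_le _ _).trans
    (Nat.add_le_add_right (Finset.card_union_le _ _) _))
  have hb1 : ((NH w).biUnion fun x => NG (φ x)).card ≤ Δ * m :=
    (Finset.card_biUnion_le_card_mul _ _ m (fun x _ => hNG _)).trans
      (Nat.mul_le_mul_right _ (hNH w))
  have hb2 : ((NG (φ w)).biUnion fun y => NH y).card ≤ m * Δ :=
    (Finset.card_biUnion_le_card_mul _ _ Δ (fun x _ => hNH _)).trans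
      (Nat.mul_le_mul_right _ (hNG _))
  rw [Finset.card_univ] at hc
  rw [Set.ncard_eq_toFinset_card']
  nlinarith

/-- A bijection all of whose images of edges are edges (Sauer–Spencer). -/
theorem rb_exists {V W : Type} [Fintype V] [Fintype W] [DecidableEq W] (G : SimpleGraph V)
    (H : SimpleGraph W) (hcard : Fintype.card W = Fintype.card V)
    (hswap : ∀ (φ : W ≃ V) (w : W), ∃ u : W, ∀ x y, H.Adj x y → (x = w ∨ x = u) →
      G.Adj (φ (Equiv.swap w u x)) (φ (Equiv.swap w u y))) :
    ∃ φ : W ≃ V, ∀ x y, H.Adj x y → G.Adj (φ x) (φ y) := by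
  classical
  let f : (W ≃ V) → ℕ := fun φ =>
    (Finset.univ.filter (fun q : W × W => H.Adj q.1 q.2 ∧ ¬ G.Adj (φ q.1) (φ q.2))).card
  have hne : Nonempty (W ≃ V) := ⟨Fintype.equivOfCardEq hcard⟩
  obtain ⟨φ, -, hφ⟩ := Finset.exists_min_image (Finset.univ : Finset (W ≃ V)) f
    Finset.univ_nonempty
  refine ⟨φ, ?_⟩
  by_contra hbad
  push Not at hbad
  obtain ⟨w, z, hwz, hn⟩ := hbad
  obtain ⟨u, hu⟩ := hswap φ w
  have h := hφ ((Equiv.swap w u).trans φ) (Finset.mem_univ _)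
  apply absurd h
  rw [not_le]
  apply Finset.card_lt_card
  rw [Finset.ssubset_iff_of_subset]
  · refine ⟨(w, z), by simp [hwz, hn], ?_⟩
    simp only [Finset.mem_filter, not_and, not_not]
    intro _ _
    exact hu w z hwz (Or.inl rfl)
  · rintro ⟨x, y⟩ hq
    obtain ⟨hxy, hq⟩ := (Finset.mem_filter.1 hq).2
    refine Finset.mem_filter.2 ⟨Finset.mem_univ _, hxy, ?_⟩
    simp only [Equiv.trans_apply] at hq
    have hx : ¬ (x = w ∨ x = u) := fun hx => hq (hu x y hxy hx)
    have hy : ¬ (y = w ∨ y = u) := fun hy => hq (hu y x hxy.symm hy).symm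
    push Not at hx hy
    rwa [Equiv.swap_apply_of_ne_of_ne hx.1 hx.2, Equiv.swap_apply_of_ne_of_ne hy.1 hy.2] at hq

/-- The set of bijections embedding `H` in `G`. -/
noncomputable def rbOm {V W : Type} [Fintype V] [Fintype W] (G : SimpleGraph V)
    (H : SimpleGraph W) : Finset (W ≃ V) := by
  classical
  exact Finset.univ.filter (fun φ => ∀ x y, H.Adj x y → G.Adj (φ x) (φ y))

open Classical in
/-- One step of the switching argument. -/
theorem rb_step {V W : Type} [Fintype V] [Fintype W] (G : SimpleGraph V)
    (H : SimpleGraph W) (c : ℝ)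
    (hswap : ∀ (φ : W ≃ V) (w : W), c + 3 ≤ (({u : W | ∀ x y, H.Adj x y → (x = w ∨ x = u) →
      G.Adj (φ (Equiv.swap w u x)) (φ (Equiv.swap w u y))} : Set W).ncard : ℝ))
    (S : Set (Finset (W × V))) (T : Finset (W × V)) (hT : T.card ≤ 3) (a : W) (b : V)
    (haT : ∀ q ∈ T, q.1 ≠ a) (hS : ∀ E ∈ S, ∀ q ∈ E, q.1 ≠ a ∧ q.2 ≠ b) :
    (((rbOm G H).filter (fun φ => (∀ q ∈ insert (a, b) T, φ q.1 = q.2) ∧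
      ∀ E ∈ S, ¬ ∀ q ∈ E, φ q.1 = q.2)).card : ℝ) * c ≤
    ((rbOm G H).filter (fun φ => (∀ q ∈ T, φ q.1 = q.2) ∧
      ∀ E ∈ S, ¬ ∀ q ∈ E, φ q.1 = q.2)).card := by
  set X := (rbOm G H).filter (fun φ => (∀ q ∈ insert (a, b) T, φ q.1 = q.2) ∧
      ∀ E ∈ S, ¬ ∀ q ∈ E, φ q.1 = q.2) with hX
  set Y := (rbOm G H).filter (fun φ => (∀ q ∈ T, φ q.1 = q.2) ∧
      ∀ E ∈ S, ¬ ∀ q ∈ E, φ q.1 = q.2) with hY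
  let U : (W ≃ V) → Finset W := fun φ => (Finset.univ.filter (fun u => ∀ x y, H.Adj x y →
      (x = a ∨ x = u) → G.Adj (φ (Equiv.swap a u x)) (φ (Equiv.swap a u y)))) \ T.image Prod.fst
  have hU : ∀ φ, c ≤ ((U φ).card : ℝ) := by
    intro φ
    have h1 := hswap φ a
    have h2 := Finset.le_card_sdiff (T.image Prod.fst) (Finset.univ.filter (fun u => ∀ x y,
      H.Adj x y → (x = a ∨ x = u) → G.Adj (φ (Equiv.swap a u x)) (φ (Equiv.swap a u y))))
    have h3 : (T.image Prod.fst).card ≤ 3 := Finset.card_image_le.trans hT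
    have h4 : ({u : W | ∀ x y, H.Adj x y → (x = a ∨ x = u) →
      G.Adj (φ (Equiv.swap a u x)) (φ (Equiv.swap a u y))} : Set W).ncard ≤ 3 + (U φ).card := by
      rw [Set.ncard_eq_toFinset_card', Set.toFinset_ofPred]
      change _ ≤ (U φ).card at h2
      omega
    have h5 : ((({u : W | ∀ x y, H.Adj x y → (x = a ∨ x = u) →
      G.Adj (φ (Equiv.swap a u x)) (φ (Equiv.swap a u y))} : Set W).ncard : ℕ) : ℝ)
        ≤ 3 + (U φ).card := by exact_mod_cast h4
    linarith
  have hsig : (X.sigma U).card ≤ Y.card := by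
    apply Finset.card_le_card_of_injOn
      (fun q : (_ : W ≃ V) × W => (Equiv.swap a q.2).trans q.1)
    · rintro ⟨φ, u⟩ hq
      simp only [Finset.coe_sigma, Set.mem_sigma_iff, Finset.mem_coe, hX, U, Finset.mem_filter,
        Finset.mem_sdiff, rbOm, Finset.mem_univ, true_and, Finset.forall_mem_insert] at hq
      obtain ⟨⟨hOm, ⟨hab, hTφ⟩, hSφ⟩, hu, huT⟩ := hq
      simp only [hY, Finset.coe_filter, Set.mem_ofPred_eq, rbOm, Finset.mem_filter,
        Finset.mem_univ, true_and, Equiv.trans_apply]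
      refine ⟨?_, ?_, ?_⟩
      · intro x y hxy
        by_cases hx : x = a ∨ x = u
        · exact hu x y hxy hx
        by_cases hy : y = a ∨ y = u
        · exact (hu y x hxy.symm hy).symm
        push Not at hx hy
        rw [Equiv.swap_apply_of_ne_of_ne hx.1 hx.2, Equiv.swap_apply_of_ne_of_ne hy.1 hy.2]
        exact hOm x y hxy
      · intro q hq
        have hqu : q.1 ≠ u := by
          rintro rfl
          exact huT (Finset.mem_image_of_mem _ hq)
        rw [Equiv.swap_apply_of_ne_of_ne (haT q hq) hqu]
        exact hTφ q hq
      · intro E hE hall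
        apply hSφ E hE
        intro q hq
        have h1 := hS E hE q hq
        have h2 := hall q hq
        have hqu : q.1 ≠ u := by
          rintro rfl
          rw [Equiv.swap_apply_right] at h2
          exact h1.2 (h2.symm.trans hab)
        rwa [Equiv.swap_apply_of_ne_of_ne h1.1 hqu] at h2
    · rintro ⟨φ, u⟩ hq ⟨φ', u'⟩ hq' heq
      simp only [Finset.coe_sigma, Set.mem_sigma_iff, Finset.mem_coe, hX, Finset.mem_filter,
        Finset.forall_mem_insert] at hq hq'
      have h1 := hq.1.2.1.1
      have h2 := hq'.1.2.1.1
      simp only at heq h1 h2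
      have hu : u = u' := by
        have e1 : ((Equiv.swap a u).trans φ) u = b := by simp [h1]
        have e2 : ((Equiv.swap a u').trans φ') u' = b := by simp [h2]
        rw [← heq] at e2
        exact Equiv.injective _ (e1.trans e2.symm)
      subst hu
      have hφ : φ = φ' := by
        ext x
        have := DFunLike.congr_fun heq (Equiv.swap a u x)
        simpa using this
      subst hφ
      rfl
  calc (X.card : ℝ) * c = ∑ φ ∈ X, c := by rw [Finset.sum_const, nsmul_eq_mul]
    _ ≤ ∑ φ ∈ X, ((U φ).card : ℝ) := Finset.sum_le_sum (fun φ _ => hU φ)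
    _ = ((X.sigma U).card : ℝ) := by rw [Finset.card_sigma]; push_cast; rfl
    _ ≤ Y.card := by exact_mod_cast hsig

/-- The four vertex-image constraints of a conflict. -/
noncomputable def rbEv {V W : Type} (q : ((W × W) × (W × W)) × ((V × V) × (V × V))) :
    Finset (W × V) := by
  classical
  exact insert (q.1.1.1, q.2.1.1) (insert (q.1.1.2, q.2.1.2) (insert (q.1.2.1, q.2.2.1)
    (insert (q.1.2.2, q.2.2.2) ∅)))

open Classical in
/-- Four steps of the switching argument. -/
theorem rb_four {V W : Type} [Fintype V] [Fintype W] (G : SimpleGraph V)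
    (H : SimpleGraph W) (c : ℝ) (hc : 0 < c)
    (hswap : ∀ (φ : W ≃ V) (w : W), c + 3 ≤ (({u : W | ∀ x y, H.Adj x y → (x = w ∨ x = u) →
      G.Adj (φ (Equiv.swap w u x)) (φ (Equiv.swap w u y))} : Set W).ncard : ℝ))
    (S : Set (Finset (W × V))) (q : ((W × W) × (W × W)) × ((V × V) × (V × V)))
    (h12 : q.1.1.1 ≠ q.1.1.2) (h13 : q.1.1.1 ≠ q.1.2.1) (h14 : q.1.1.1 ≠ q.1.2.2)
    (h23 : q.1.1.2 ≠ q.1.2.1) (h24 : q.1.1.2 ≠ q.1.2.2) (h34 : q.1.2.1 ≠ q.1.2.2)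
    (hS : ∀ r ∈ rbEv q, ∀ E ∈ S, ∀ q' ∈ E, q'.1 ≠ r.1 ∧ q'.2 ≠ r.2) :
    (((rbOm G H).filter (fun φ => (∀ r ∈ rbEv q, φ r.1 = r.2) ∧
      ∀ E ∈ S, ¬ ∀ r ∈ E, φ r.1 = r.2)).card : ℝ) ≤
    (1 / c ^ 4) * ((rbOm G H).filter (fun φ => ∀ E ∈ S, ¬ ∀ r ∈ E, φ r.1 = r.2)).card := by
  obtain ⟨⟨⟨x, y⟩, ⟨z, t⟩⟩, ⟨⟨b0, b1⟩, ⟨b2, b3⟩⟩⟩ := q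
  simp only at h12 h13 h14 h23 h24 h34
  simp only [rbEv, Finset.forall_mem_insert] at hS
  obtain ⟨s0, s1, s2, s3, -⟩ := hS
  have c1 : ({(t, b3)} : Finset (W × V)).card ≤ 1 := by simp
  have c2 := Finset.card_insert_le (z, b2) (insert (t, b3) (∅ : Finset (W × V)))
  have c3 := Finset.card_insert_le (y, b1) (insert (z, b2) (insert (t, b3) (∅ : Finset (W × V))))
  simp only [insert_empty_eq] at c2 c3
  have e3 := rb_step G H c hswap S ∅ (by simp) t b3 (by simp) s3
  have e2 := rb_step G H c hswap S (insert (t, b3) ∅) (by simp) z b2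
    (by simp [Ne.symm h34]) s2
  have e1 := rb_step G H c hswap S (insert (z, b2) (insert (t, b3) ∅))
    (by simp only [insert_empty_eq]; omega) y b1
    (by simp [Ne.symm h23, Ne.symm h24]) s1
  have e0 := rb_step G H c hswap S (insert (y, b1) (insert (z, b2) (insert (t, b3) ∅)))
    (by simp only [insert_empty_eq]; omega) x b0
    (by simp [Ne.symm h12, Ne.symm h13, Ne.symm h14]) s0
  have hempty : ((rbOm G H).filter (fun φ => (∀ q ∈ (∅ : Finset (W × V)), φ q.1 = q.2) ∧
      ∀ E ∈ S, ¬ ∀ q ∈ E, φ q.1 = q.2)) =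
      ((rbOm G H).filter (fun φ => ∀ E ∈ S, ¬ ∀ r ∈ E, φ r.1 = r.2)) := by
    apply Finset.filter_congr
    intro φ _
    simp
  rw [hempty] at e3
  have hc4 : 0 < c ^ 4 := by positivity
  rw [one_div, inv_mul_eq_div, le_div_iff₀ hc4]
  refine le_trans ?_ e3
  have := mul_le_mul_of_nonneg_right e2 hc.le
  refine le_trans ?_ this
  have := mul_le_mul_of_nonneg_right (mul_le_mul_of_nonneg_right e1 hc.le) hc.le
  refine le_trans ?_ this
  have := mul_le_mul_of_nonneg_right
    (mul_le_mul_of_nonneg_right (mul_le_mul_of_nonneg_right e0 hc.le) hc.le) hc.le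
  refine le_trans (le_of_eq ?_) this
  have hfin : ∀ r : ℝ, r * c * c * c * c = r * c ^ 4 := fun r => by ring
  rw [hfin]
  congr 2

/-- A conflict: two disjoint edges of `H` and two edges of `G` of the same colour. -/
def rbValid {V W : Type} (G : SimpleGraph V) (H : SimpleGraph W) (χ : Sym2 V → ℕ)
    (q : ((W × W) × (W × W)) × ((V × V) × (V × V))) : Prop :=
  (H.Adj q.1.1.1 q.1.1.2 ∧ H.Adj q.1.2.1 q.1.2.2) ∧
  (q.1.1.1 ≠ q.1.2.1 ∧ q.1.1.1 ≠ q.1.2.2 ∧ q.1.1.2 ≠ q.1.2.1 ∧ q.1.1.2 ≠ q.1.2.2) ∧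
  G.Adj q.2.1.1 q.2.1.2 ∧ G.Adj q.2.2.1 q.2.2.2 ∧
  χ s(q.2.1.1, q.2.1.2) = χ s(q.2.2.1, q.2.2.2)

open Classical in
/-- Counting pairs of same-coloured edges, the first of which is in `P`. -/
theorem rb_count_pairs {V : Type} [Fintype V] (G : SimpleGraph V) (χ : Sym2 V → ℕ) (L : ℕ)
    (hL : ∀ c, (Finset.univ.filter (fun p : V × V => G.Adj p.1 p.2 ∧ χ s(p.1, p.2) = c)).card ≤ L)
    (P : Finset (V × V)) :
    (Finset.univ.filter (fun b : (V × V) × (V × V) => b.1 ∈ P ∧ G.Adj b.2.1 b.2.2 ∧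
      χ s(b.2.1, b.2.2) = χ s(b.1.1, b.1.2))).card ≤ L * P.card := by
  refine (Finset.card_le_mul_card_image (f := Prod.fst) _ L ?_).trans
    (Nat.mul_le_mul_left _ (Finset.card_le_card ?_))
  · intro p _
    refine le_trans ?_ (hL (χ s(p.1, p.2)))
    apply Finset.card_le_card_of_injOn Prod.snd
    · rintro ⟨p', q⟩ h
      simp only [Finset.coe_filter, Finset.mem_filter, Finset.mem_univ, true_and,
        Set.mem_ofPred_eq] at h ⊢
      obtain ⟨⟨_, h1, h2⟩, rfl⟩ := h
      exact ⟨h1, h2⟩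
    · rintro ⟨p', q⟩ h ⟨p'', q'⟩ h' heq
      simp only [Finset.coe_filter, Set.mem_ofPred_eq] at h h' heq
      rw [h.2, h'.2, heq]
  · intro p hp
    simp only [Finset.mem_image, Finset.mem_filter] at hp
    obtain ⟨a, ha, rfl⟩ := hp
    exact ha.2.1

open Classical in
/-- Colour classes, counted as ordered pairs. -/
theorem rb_count_class {V : Type} [Fintype V] (G : SimpleGraph V) (χ : Sym2 V → ℕ) (c : ℕ) :
    (Finset.univ.filter (fun p : V × V => G.Adj p.1 p.2 ∧ χ s(p.1, p.2) = c)).card ≤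
      2 * ({e : Sym2 V | e ∈ G.edgeSet ∧ χ e = c}).ncard := by
  refine (Finset.card_le_mul_card_image (f := fun p : V × V => s(p.1, p.2)) _ 2 ?_).trans
    (Nat.mul_le_mul_left _ ?_)
  · intro e _
    induction e using Sym2.ind with
    | _ x y =>
      refine le_trans (Finset.card_le_card (t := {(x, y), (y, x)}) ?_) Finset.card_le_two
      rintro ⟨p, q⟩ h
      have := (Finset.mem_filter.1 h).2
      simp only [Sym2.eq_iff] at this
      simpa using this
  · rw [← Set.ncard_coe_finset]
    apply Set.ncard_le_ncard _ (Set.toFinite _)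
    intro e he
    simp only [Finset.coe_image, Set.mem_image, Finset.coe_filter, Set.mem_ofPred_eq,
      Finset.mem_univ, true_and] at he
    obtain ⟨p, hp, rfl⟩ := he
    exact ⟨hp.1, hp.2⟩

open Classical in
/-- Ordered pairs with a given first or second coordinate that are adjacent. -/
theorem rb_count_at {W : Type} [Fintype W] (H : SimpleGraph W) (Δ : ℕ)
    (hH : ∀ w, (H.neighborSet w).ncard ≤ Δ) (w : W) :
    (Finset.univ.filter (fun p : W × W => H.Adj p.1 p.2 ∧ (p.1 = w ∨ p.2 = w))).card ≤ 2 * Δ := by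
  have h1 : (Finset.univ.filter (fun y => H.Adj w y)).card ≤ Δ := by
    refine le_trans (le_of_eq ?_) (hH w)
    rw [← Set.ncard_coe_finset]
    congr 1
    ext y; simp
  have hsub : (Finset.univ.filter (fun p : W × W => H.Adj p.1 p.2 ∧ (p.1 = w ∨ p.2 = w))) ⊆
      (Finset.univ.filter (fun y => H.Adj w y)).image (fun y => (w, y)) ∪
      (Finset.univ.filter (fun y => H.Adj w y)).image (fun y => (y, w)) := by
    rintro ⟨p, q⟩ h
    simp only [Finset.mem_filter, Finset.mem_univ, true_and] at h
    simp only [Finset.mem_union, Finset.mem_image, Finset.mem_filter, Finset.mem_univ, true_and,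
      Prod.mk.injEq]
    rcases h with ⟨h, rfl | rfl⟩
    · exact Or.inl ⟨q, h, rfl, rfl⟩
    · exact Or.inr ⟨p, h.symm, rfl, rfl⟩
  have h2 := (Finset.card_le_card hsub).trans (Finset.card_union_le _ _)
  have h3 := Finset.card_image_le (s := Finset.univ.filter (fun y => H.Adj w y))
    (f := fun y => (w, y))
  have h4 := Finset.card_image_le (s := Finset.univ.filter (fun y => H.Adj w y))
    (f := fun y => (y, w))
  omega

open Classical in
/-- Number of ordered adjacent pairs. -/
theorem rb_count_all {W : Type} [Fintype W] (H : SimpleGraph W) (Δ : ℕ)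
    (hH : ∀ w, (H.neighborSet w).ncard ≤ Δ) :
    (Finset.univ.filter (fun p : W × W => H.Adj p.1 p.2)).card ≤ Δ * Fintype.card W := by
  refine (Finset.card_le_mul_card_image (f := Prod.fst) _ Δ ?_).trans
    (Nat.mul_le_mul_left _ (Finset.card_le_univ _))
  intro w _
  refine le_trans ?_ (hH w)
  rw [← Set.ncard_coe_finset]
  refine Set.ncard_le_ncard_of_injOn Prod.snd ?_ ?_ (Set.toFinite _)
  · rintro ⟨p, q⟩ h
    simp only [Finset.coe_filter, Finset.mem_filter, Finset.mem_univ, true_and,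
      Set.mem_ofPred_eq] at h
    obtain ⟨h, rfl⟩ := h
    exact h
  · rintro ⟨p, q⟩ h ⟨p', q'⟩ h' heq
    simp only [Finset.coe_filter, Set.mem_ofPred_eq] at h h' heq
    rw [h.2, h'.2, heq]

open Classical in
/-- Counting the conflicts that touch a given conflict. -/
theorem rb_count {V W : Type} [Fintype V] [Fintype W] (G : SimpleGraph V) (H : SimpleGraph W)
    (χ : Sym2 V → ℕ) (n Δ L : ℕ) (hV : Fintype.card V = n) (hW : Fintype.card W = n)
    (hH : ∀ w, (H.neighborSet w).ncard ≤ Δ)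
    (hL : ∀ c, (Finset.univ.filter (fun p : V × V => G.Adj p.1 p.2 ∧ χ s(p.1, p.2) = c)).card ≤ L)
    (E : Finset (W × V)) (hE : E.card ≤ 4) :
    (Finset.univ.filter (fun q => rbValid G H χ q ∧
      ∃ r ∈ E, ∃ r' ∈ rbEv q, r'.1 = r.1 ∨ r'.2 = r.2)).card ≤ 32 * Δ ^ 2 * n ^ 3 * L := by
  let EH : Finset (W × W) := Finset.univ.filter (fun p : W × W => H.Adj p.1 p.2)
  let EHw : W → Finset (W × W) := fun w =>
    Finset.univ.filter (fun p : W × W => H.Adj p.1 p.2 ∧ (p.1 = w ∨ p.2 = w))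
  let Pv : V → Finset (V × V) := fun v =>
    ({v} : Finset V) ×ˢ (Finset.univ : Finset V) ∪ (Finset.univ : Finset V) ×ˢ ({v} : Finset V)
  let B : Finset (V × V) → Finset ((V × V) × (V × V)) := fun P =>
    Finset.univ.filter (fun b : (V × V) × (V × V) => b.1 ∈ P ∧ G.Adj b.2.1 b.2.2 ∧
      χ s(b.2.1, b.2.2) = χ s(b.1.1, b.1.2))
  have hB : ∀ P, (B P).card ≤ L * P.card := rb_count_pairs G χ L hL
  have hEH : EH.card ≤ Δ * n := hW ▸ rb_count_all H Δ hH
  have hEHw : ∀ w, (EHw w).card ≤ 2 * Δ := rb_count_at H Δ hH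
  have hPv : ∀ v, (Pv v).card ≤ 2 * n := by
    intro v
    refine (Finset.card_union_le _ _).trans ?_
    simp only [Finset.card_product, Finset.card_singleton, Finset.card_univ, hV]
    omega
  have hPu : (Finset.univ : Finset (V × V)).card = n * n := by
    rw [Finset.card_univ, Fintype.card_prod, hV]
  let F : W × V → Finset (((W × W) × (W × W)) × ((V × V) × (V × V))) := fun r =>
    ((EHw r.1 ×ˢ EH) ∪ (EH ×ˢ EHw r.1)) ×ˢ (B Finset.univ) ∪
    (EH ×ˢ EH) ×ˢ ((B (Pv r.2)) ∪ (B (Pv r.2)).image Prod.swap)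
  have hF : ∀ r, (F r).card ≤ 8 * Δ ^ 2 * n ^ 3 * L := by
    intro r
    have k1 : ((EHw r.1 ×ˢ EH) ∪ (EH ×ˢ EHw r.1)).card ≤ 4 * Δ ^ 2 * n := by
      refine (Finset.card_union_le _ _).trans ?_
      rw [Finset.card_product, Finset.card_product]
      have a1 := Nat.mul_le_mul (hEHw r.1) hEH
      nlinarith
    have k2 : (B Finset.univ).card ≤ L * n ^ 2 := by
      refine (hB _).trans (le_of_eq ?_)
      rw [hPu]; ring
    have k3 : (EH ×ˢ EH).card ≤ Δ ^ 2 * n ^ 2 := by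
      rw [Finset.card_product]
      refine (Nat.mul_le_mul hEH hEH).trans (le_of_eq (by ring))
    have k4 : ((B (Pv r.2)) ∪ (B (Pv r.2)).image Prod.swap).card ≤ 4 * n * L := by
      refine (Finset.card_union_le _ _).trans ?_
      have a1 := (hB (Pv r.2)).trans (Nat.mul_le_mul_left L (hPv r.2))
      have a2 := Finset.card_image_le (s := B (Pv r.2)) (f := Prod.swap)
      nlinarith
    refine (Finset.card_union_le _ _).trans ?_
    rw [Finset.card_product, Finset.card_product]
    have a1 := Nat.mul_le_mul k1 k2
    have a2 := Nat.mul_le_mul k3 k4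
    calc _ ≤ _ := Nat.add_le_add a1 a2
      _ = _ := by ring
  have hsub : (Finset.univ.filter (fun q => rbValid G H χ q ∧
      ∃ r ∈ E, ∃ r' ∈ rbEv q, r'.1 = r.1 ∨ r'.2 = r.2)) ⊆ E.biUnion F := by
    rintro ⟨⟨⟨x, y⟩, ⟨z, t⟩⟩, ⟨⟨b0, b1⟩, ⟨b2, b3⟩⟩⟩ hq
    obtain ⟨-, hv, ⟨w, v⟩, hr, r', hr', hor⟩ := Finset.mem_filter.1 hq
    refine Finset.mem_biUnion.2 ⟨(w, v), hr, ?_⟩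
    obtain ⟨⟨v1, v2⟩, -, v3, v4, v5⟩ := hv
    simp only at v1 v2 v3 v4 v5 hor
    simp only [rbEv, Finset.mem_insert, Finset.notMem_empty, or_false] at hr'
    simp only [F, EHw, EH, B, Pv, Finset.mem_union, Finset.mem_product, Finset.mem_filter,
      Finset.mem_univ, true_and, and_true, Finset.mem_singleton, Finset.mem_image, Prod.exists,
      Prod.swap_prod_mk, Prod.mk.injEq, v1, v2, v4, v5]
    have hsw : (b2 = v ∨ b3 = v) → ∃ a b c d, ((a = v ∨ b = v) ∧ G.Adj c d ∧
        χ s(c, d) = χ s(a, b)) ∧ (c = b0 ∧ d = b1) ∧ a = b2 ∧ b = b3 :=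
      fun h => ⟨b2, b3, b0, b1, ⟨h, v3, v5⟩, ⟨rfl, rfl⟩, rfl, rfl⟩
    rcases hr' with rfl | rfl | rfl | rfl <;> rcases hor with hor | hor <;> simp only at hor
    · exact Or.inl (Or.inl (Or.inl hor))
    · exact Or.inr (Or.inl (Or.inl hor))
    · exact Or.inl (Or.inl (Or.inr hor))
    · exact Or.inr (Or.inl (Or.inr hor))
    · exact Or.inl (Or.inr (Or.inl hor))
    · exact Or.inr (Or.inr (hsw (Or.inl hor)))
    · exact Or.inl (Or.inr (Or.inr hor))
    · exact Or.inr (Or.inr (hsw (Or.inr hor)))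
  refine (Finset.card_le_card hsub).trans
    ((Finset.card_biUnion_le_card_mul _ _ _ (fun r _ => hF r)).trans ?_)
  refine (Nat.mul_le_mul_right _ hE).trans (le_of_eq (by ring))

/-- For every γ > 0 there exists μ > 0 such that for every Δ ∈ ℕ there is n₀
such that for every even n ≥ n₀: if G is a graph on n vertices with minimum degree at
least (1 − 1/(2Δ) + γ)n and H is a balanced bipartite graph on n vertices with maximum
degree at most Δ, then every proper (μn/Δ²)-bounded edge colouring χ of G admits a
subgraph of G isomorphic to H (an injective homomorphic copy of H) that is rainbow. -/
theorem rainbow_bounded_degree_bipartite_embedding :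
    ∀ γ : ℝ, 0 < γ →
    ∃ μ : ℝ, 0 < μ ∧ ∀ Δ : ℕ, ∃ n₀ : ℕ, ∀ n : ℕ, n₀ ≤ n → Even n →
      ∀ (V : Type) [Fintype V] (G : SimpleGraph V),
        Fintype.card V = n →
        (∀ v : V, (1 - 1 / (2 * (Δ : ℝ)) + γ) * n ≤ ((G.neighborSet v).ncard : ℝ)) →
      ∀ (W : Type) [Fintype W] (H : SimpleGraph W) (C D : Set W),
        Fintype.card W = n →
        C ∪ D = Set.univ → Disjoint C D → C.ncard = n / 2 → D.ncard = n / 2 →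
        (∀ u w : W, H.Adj u w → (u ∈ C ∧ w ∈ D) ∨ (u ∈ D ∧ w ∈ C)) →
        (∀ w : W, (H.neighborSet w).ncard ≤ Δ) →
      ∀ χ : Sym2 V → ℕ,
        (∀ e ∈ G.edgeSet, ∀ f ∈ G.edgeSet, e ≠ f → (∃ v : V, v ∈ e ∧ v ∈ f) → χ e ≠ χ f) →
        (∀ c : ℕ, (({e : Sym2 V | e ∈ G.edgeSet ∧ χ e = c}).ncard : ℝ) ≤ μ * n / (Δ : ℝ) ^ 2) →
        ∃ φ : W → V, Function.Injective φ ∧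
          (∀ u w : W, H.Adj u w → G.Adj (φ u) (φ w)) ∧
          (∀ e ∈ H.edgeSet, ∀ f ∈ H.edgeSet, χ (e.map φ) = χ (f.map φ) → e = f) := by
  classical
  intro γ hγ
  refine ⟨γ ^ 4 / 256, by positivity, fun Δ => ⟨⌈3 / γ⌉₊ + 1, ?_⟩⟩
  intro n hn _ V _ G hV hdeg W _ H C D hW _ _ _ _ _ hH χ hprop hbdd
  set μ : ℝ := γ ^ 4 / 256 with hμ
  have hn3 : 3 ≤ γ * n := by
    have h1 : (⌈3 / γ⌉₊ : ℝ) ≤ n := by exact_mod_cast (by omega : ⌈3 / γ⌉₊ ≤ n)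
    have h2 := (Nat.le_ceil (3 / γ)).trans h1
    rw [div_le_iff₀ hγ] at h2
    linarith
  have hn1 : 1 ≤ n := by omega
  have hnR : (0 : ℝ) < n := by exact_mod_cast hn1
  have hne : Nonempty V := Fintype.card_pos_iff.1 (by omega)
  have hdeg_le : ∀ v : V, ((G.neighborSet v).ncard : ℝ) ≤ n := by
    intro v
    rw [← hV, ← Nat.card_eq_fintype_card]
    exact_mod_cast Set.ncard_le_card _
  have hΔ : 1 ≤ Δ := by
    by_contra h0
    have h0 : Δ = 0 := by omega
    obtain ⟨v⟩ := hne
    have h1 := (hdeg v).trans (hdeg_le v)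
    simp only [h0, Nat.cast_zero, mul_zero, div_zero, sub_zero] at h1
    nlinarith
  have hΔR : (1 : ℝ) ≤ Δ := by exact_mod_cast hΔ
  -- non-neighbours
  set m : ℕ := ⌊(1 / (2 * (Δ : ℝ)) - γ) * n⌋₊ with hm
  have hnon : ∀ v : V, (({x | ¬ G.Adj v x} : Set V).ncard : ℝ) ≤ (1 / (2 * (Δ : ℝ)) - γ) * n := by
    intro v
    have h1 := Set.ncard_add_ncard_compl (G.neighborSet v)
    have h2 : (G.neighborSet v)ᶜ = {x | ¬ G.Adj v x} := by
      ext x; simp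
    rw [h2, Nat.card_eq_fintype_card, hV] at h1
    have h3 : ((G.neighborSet v).ncard : ℝ) + (({x | ¬ G.Adj v x} : Set V).ncard : ℝ) = n := by
      exact_mod_cast h1
    have h4 := hdeg v
    linarith
  have hnonm : ∀ v : V, ({x | ¬ G.Adj v x} : Set V).ncard ≤ m :=
    fun v => Nat.le_floor (hnon v)
  have hm_nonneg : 0 ≤ (1 / (2 * (Δ : ℝ)) - γ) * n := by
    obtain ⟨v⟩ := hne
    exact le_trans (by positivity) (hnon v)
  have hm_le : (m : ℝ) ≤ (1 / (2 * (Δ : ℝ)) - γ) * n := Nat.floor_le hm_nonneg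
  have h2Δm : 2 * (Δ : ℝ) * m ≤ n - 2 * (γ * n) := by
    have h1 : 2 * (Δ : ℝ) * m ≤ 2 * (Δ : ℝ) * ((1 / (2 * (Δ : ℝ)) - γ) * n) := by gcongr
    have h2 : 2 * (Δ : ℝ) * ((1 / (2 * (Δ : ℝ)) - γ) * n) = n - 2 * Δ * (γ * n) := by
      field_simp
    have h3 : γ * n ≤ Δ * (γ * n) := by nlinarith
    nlinarith
  have hswap : ∀ (φ : W ≃ V) (w : W), γ * n + 3 ≤
      (({u : W | ∀ x y, H.Adj x y → (x = w ∨ x = u) →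
      G.Adj (φ (Equiv.swap w u x)) (φ (Equiv.swap w u y))} : Set W).ncard : ℝ) := by
    intro φ w
    have h1 := rb_swap G H Δ m hnonm hH φ w
    rw [hW] at h1
    have h2 : (n : ℝ) ≤ 2 * Δ * m + (({u : W | ∀ x y, H.Adj x y → (x = w ∨ x = u) →
      G.Adj (φ (Equiv.swap w u x)) (φ (Equiv.swap w u y))} : Set W).ncard : ℝ) := by
      exact_mod_cast h1
    linarith
  have hOm : (rbOm G H).Nonempty := by
    obtain ⟨φ, hφ⟩ := rb_exists G H (hW.trans hV.symm) (by
      intro φ w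
      have h1 := hswap φ w
      have h2 : (0 : ℝ) < (({u : W | ∀ x y, H.Adj x y → (x = w ∨ x = u) →
        G.Adj (φ (Equiv.swap w u x)) (φ (Equiv.swap w u y))} : Set W).ncard : ℝ) := by
        linarith
      have h3 := Set.nonempty_of_ncard_ne_zero (Nat.cast_pos.1 h2).ne'
      exact h3)
    exact ⟨φ, by simp only [rbOm, Finset.mem_filter, Finset.mem_univ, true_and]; exact hφ⟩
  set L : ℕ := ⌊2 * (μ * n / (Δ : ℝ) ^ 2)⌋₊ with hLdef
  have hμ0 : 0 < μ := by positivity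
  have hLle : (L : ℝ) ≤ 2 * (μ * n / (Δ : ℝ) ^ 2) := Nat.floor_le (by positivity)
  have hL : ∀ c, (Finset.univ.filter
      (fun p : V × V => G.Adj p.1 p.2 ∧ χ s(p.1, p.2) = c)).card ≤ L := by
    intro c
    apply Nat.le_floor
    have h1 := rb_count_class G χ c
    have h2 : ((Finset.univ.filter
      (fun p : V × V => G.Adj p.1 p.2 ∧ χ s(p.1, p.2) = c)).card : ℝ) ≤
      2 * (({e : Sym2 V | e ∈ G.edgeSet ∧ χ e = c}).ncard : ℝ) := by exact_mod_cast h1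
    have h3 := hbdd c
    linarith
  let Q := {q : ((W × W) × (W × W)) × ((V × V) × (V × V)) // rbValid G H χ q}
  let A : Q → (W ≃ V) → Prop := fun q φ => ∀ r ∈ rbEv q.1, φ r.1 = r.2
  let N : Q → Finset Q := fun i => Finset.univ.filter
    (fun j => ∃ r ∈ rbEv i.1, ∃ r' ∈ rbEv j.1, r'.1 = r.1 ∨ r'.2 = r.2)
  have hc0 : 0 < γ * n := by positivity
  have hc4 : (81 : ℝ) ≤ (γ * n) ^ 4 := by
    calc (81 : ℝ) = 3 ^ 4 := by norm_num
      _ ≤ _ := by gcongr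
  obtain ⟨φ, hφ, hav⟩ := rb_lll (rbOm G H) hOm A N (1 / (γ * n) ^ 4) (64 * μ * n ^ 4)
    (by positivity) (by
      intro i S hS
      obtain ⟨⟨v1, v2⟩, ⟨d1, d2, d3, d4⟩, -⟩ := i.2
      have h := rb_four G H (γ * n) hc0 hswap ((fun j : Q => rbEv j.1) '' (S : Set Q)) i.1
        v1.ne d1 d2 d3 d4 v2.ne (by
          rintro r hr E ⟨j, hj, rfl⟩ q' hq'
          have h1 := hS j hj
          simp only [N, Finset.mem_filter, Finset.mem_univ, true_and, not_exists, not_and,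
            not_or] at h1
          exact h1 r hr q' hq')
      refine le_trans (le_of_eq ?_) (h.trans (le_of_eq ?_))
      · apply congrArg
        apply congrArg
        ext φ
        simp only [Finset.mem_filter, Set.forall_mem_image, Finset.mem_coe, A]
      · apply congrArg
        apply congrArg
        apply congrArg
        ext φ
        simp only [Finset.mem_filter, Set.forall_mem_image, Finset.mem_coe, A]) (by
      intro i
      have h1 := rb_count G H χ n Δ L hV hW hH hL (rbEv i.1) (by
        simp only [rbEv]
        refine (Finset.card_insert_le _ _).trans (Nat.add_le_add_right ?_ 1)
        refine (Finset.card_insert_le _ _).trans (Nat.add_le_add_right ?_ 1)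
        refine (Finset.card_insert_le _ _).trans (Nat.add_le_add_right ?_ 1)
        refine (Finset.card_insert_le _ _).trans (Nat.add_le_add_right ?_ 1)
        simp)
      have h2 : (N i).card ≤ 32 * Δ ^ 2 * n ^ 3 * L := by
        refine le_trans ?_ h1
        apply Finset.card_le_card_of_injOn Subtype.val
        · intro j hj
          have hj' := (Finset.mem_filter.1 (Finset.mem_coe.1 hj)).2
          exact Finset.mem_coe.2 (Finset.mem_filter.2 ⟨Finset.mem_univ _, j.2, hj'⟩)
        · exact Subtype.val_injective.injOn
      have h3 : ((N i).card : ℝ) ≤ 32 * Δ ^ 2 * n ^ 3 * L := by exact_mod_cast h2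
      refine h3.trans ?_
      calc (32 * (Δ : ℝ) ^ 2 * n ^ 3 * L) ≤ 32 * Δ ^ 2 * n ^ 3 * (2 * (μ * n / (Δ : ℝ) ^ 2)) := by
            gcongr
        _ = 64 * μ * n ^ 4 := by field_simp; norm_num) (by
      apply le_of_eq
      rw [hμ]
      field_simp
      norm_num) (by
      rw [mul_one_div, div_le_one (by positivity)]
      linarith)
  simp only [rbOm, Finset.mem_filter, Finset.mem_univ, true_and] at hφ
  refine ⟨φ, φ.injective, hφ, ?_⟩
  intro e he f hf hχ
  by_contra hef
  have hmap : e.map φ ≠ f.map φ := fun h => hef (Sym2.map.injective φ.injective h)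
  induction e using Sym2.ind with
  | _ x y =>
  induction f using Sym2.ind with
  | _ z t =>
  have hxy : H.Adj x y := he
  have hzt : H.Adj z t := hf
  simp only [Sym2.map_mk] at hχ hmap
  have hdis : ∀ v, v ∈ s(φ x, φ y) → v ∉ s(φ z, φ t) := fun v h1 h2 =>
    hprop _ (hφ x y hxy) _ (hφ z t hzt) hmap ⟨v, h1, h2⟩ hχ
  refine hav ⟨(((x, y), (z, t)), ((φ x, φ y), (φ z, φ t))), ⟨hxy, hzt⟩, ⟨?_, ?_, ?_, ?_⟩,
    hφ x y hxy, hφ z t hzt, hχ⟩ ?_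
  · intro h; simp only at h; exact hdis (φ x) (by simp) (by simp [h])
  · intro h; simp only at h; exact hdis (φ x) (by simp) (by simp [h])
  · intro h; simp only at h; exact hdis (φ y) (by simp) (by simp [h])
  · intro h; simp only at h; exact hdis (φ y) (by simp) (by simp [h])
  · simp [A, rbEv]
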